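/- Suppose Z̃ = L₁₁ Q₁, Ũ = L₂₁ Q₁ + L₂₂ Q₂, and Ỹ = L₃₁ Q₁ + L₃₂ Q₂ + L₃₃ Q₃, where L₁₁ ∈ ℝ^{q×q} and L₂₂ ∈ ℝ^{r×r} are invertible, L₂₁ ∈ ℝ^{r×q}, L₃₁ ∈ ℝ^{s×q}, L₃₂ ∈ ℝ^{s×r}, L₃₃ ∈ ℝ^{s×s}, and Q₁ ∈ ℝ^{q×n}, Q₂ ∈ ℝ^{r×n}, Q₃ ∈ ℝ^{s×n} satisfy Q_i Q_iᵀ = I and Q_i Q_jᵀ = 0 for i ≠ j. Then the vertical stack W of Z̃ and Ũ has full row rank, and Ỹ Wᵀ (W Wᵀ)^{−1} = [P_sbs F_sbs] with F_sbs = L₃₂ L₂₂^{−1} and P_sbs = (L₃₁ − F_sbs L₂₁) L₁₁^{−1}. -/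

import Mathlib

open Matrix Finset

/-- Given an LQ decomposition `Z̃ = L₁₁Q₁`, `Ũ = L₂₁Q₁ + L₂₂Q₂`,
`Ỹ = L₃₁Q₁ + L₃₂Q₂ + L₃₃Q₃` with `L₁₁, L₂₂` invertible and the `Q_i` having orthonormal rows
with mutually orthogonal row spaces, the stack `W = [Z̃; Ũ]` has full row rank and
`Ỹ Wᵀ (W Wᵀ)⁻¹ = [P_sbs  F_sbs]` with `F_sbs = L₃₂ L₂₂⁻¹` and
`P_sbs = (L₃₁ − F_sbs L₂₁) L₁₁⁻¹`. -/
theorem subspace_predictor_from_LQ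
    (q r s n : ℕ) (hq : 0 < q) (hr : 0 < r) (hs : 0 < s) (hn : 0 < n) (hqrsn : q + r + s ≤ n)
    (L11 : Matrix (Fin q) (Fin q) ℝ) (L21 : Matrix (Fin r) (Fin q) ℝ)
    (L22 : Matrix (Fin r) (Fin r) ℝ) (L31 : Matrix (Fin s) (Fin q) ℝ)
    (L32 : Matrix (Fin s) (Fin r) ℝ) (L33 : Matrix (Fin s) (Fin s) ℝ)
    (Q1 : Matrix (Fin q) (Fin n) ℝ) (Q2 : Matrix (Fin r) (Fin n) ℝ)
    (Q3 : Matrix (Fin s) (Fin n) ℝ)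
    (hL11 : IsUnit L11) (hL22 : IsUnit L22)
    (hQ11 : Q1 * Q1ᵀ = 1) (hQ22 : Q2 * Q2ᵀ = 1) (hQ33 : Q3 * Q3ᵀ = 1)
    (hQ12 : Q1 * Q2ᵀ = 0) (hQ13 : Q1 * Q3ᵀ = 0) (hQ23 : Q2 * Q3ᵀ = 0)
    (hQ21 : Q2 * Q1ᵀ = 0) (hQ31 : Q3 * Q1ᵀ = 0) (hQ32 : Q3 * Q2ᵀ = 0)
    (Z : Matrix (Fin q) (Fin n) ℝ) (U : Matrix (Fin r) (Fin n) ℝ)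
    (Y : Matrix (Fin s) (Fin n) ℝ)
    (hZ : Z = L11 * Q1) (hU : U = L21 * Q1 + L22 * Q2)
    (hY : Y = L31 * Q1 + L32 * Q2 + L33 * Q3) :
    letI W := Matrix.fromRows Z U
    letI Fsbs := L32 * L22⁻¹
    letI Psbs := (L31 - Fsbs * L21) * L11⁻¹
    (W.rank = q + r ∧
      Y * Wᵀ * (W * Wᵀ)⁻¹ = Matrix.fromCols Psbs Fsbs) := by
  let W := Matrix.fromRows Z U
  let Fsbs := L32 * L22⁻¹
  let Psbs := (L31 - Fsbs * L21) * L11⁻¹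
  change W.rank = q + r ∧ Y * Wᵀ * (W * Wᵀ)⁻¹ = Matrix.fromCols Psbs Fsbs
  have h1 : IsUnit L11.det := (Matrix.isUnit_iff_isUnit_det _).1 hL11
  have h2 : IsUnit L22.det := (Matrix.isUnit_iff_isUnit_det _).1 hL22
  obtain ⟨L, hL⟩ : ∃ L, L = Matrix.fromBlocks L11 0 L21 L22 := ⟨_, rfl⟩
  obtain ⟨Q, hQ⟩ : ∃ Q, Q = Matrix.fromRows Q1 Q2 := ⟨_, rfl⟩
  have hLdet : IsUnit L.det := by
    rw [hL, Matrix.det_fromBlocks_zero₁₂]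
    exact h1.mul h2
  have hW : W = L * Q := by
    simp only [W, hL, hQ, hZ, hU, Matrix.fromBlocks_mul_fromRows, Matrix.zero_mul, add_zero]
  have hQQ : Q * Qᵀ = 1 := by
    rw [hQ, Matrix.transpose_fromRows, Matrix.fromRows_mul_fromCols, hQ11, hQ12, hQ21, hQ22,
      Matrix.fromBlocks_one]
  have hYQ : Y * Qᵀ = Matrix.fromCols L31 L32 := by
    rw [hQ, Matrix.transpose_fromRows, Matrix.mul_fromCols, hY]
    simp only [Matrix.add_mul, Matrix.mul_assoc, hQ11, hQ12, hQ21, hQ22, hQ31, hQ32,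
      Matrix.mul_one, Matrix.mul_zero, add_zero, zero_add]
  have hPF : Matrix.fromCols Psbs Fsbs * L = Matrix.fromCols L31 L32 := by
    rw [hL, Matrix.fromCols_mul_fromBlocks]
    simp only [Psbs, Matrix.mul_zero, zero_add, Matrix.nonsing_inv_mul_cancel_right _ _ h1,
      sub_add_cancel]
    simp only [Fsbs, Matrix.nonsing_inv_mul_cancel_right _ _ h2]
  have hWW : W * Wᵀ = L * Lᵀ := by
    rw [hW, Matrix.transpose_mul, Matrix.mul_assoc, ← Matrix.mul_assoc Q, hQQ, Matrix.one_mul]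
  have hdet : IsUnit (W * Wᵀ).det := by
    rw [hWW, Matrix.det_mul, Matrix.det_transpose]
    exact hLdet.mul hLdet
  refine ⟨?_, ?_⟩
  · rw [← Matrix.rank_self_mul_transpose,
      Matrix.rank_of_isUnit _ ((Matrix.isUnit_iff_isUnit_det _).2 hdet)]
    simp
  · have : Y * Wᵀ = Matrix.fromCols Psbs Fsbs * (W * Wᵀ) := by
      rw [hWW, ← Matrix.mul_assoc, hPF, hW, Matrix.transpose_mul, ← Matrix.mul_assoc, hYQ]
    rw [this, Matrix.mul_nonsing_inv_cancel_right _ _ hdet]
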